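/- Under these hypotheses the following commutation relations hold: (a) ξ_{α,n}·ξ_{β,n+p} = ξ_{β,n+p}·ξ_{α,n} for 0 ≤ α,β ≤ r+1 and |p| ≤ |α−β|; (b) x_{α,n}·x_{β,n+p} = x_{β,n+p}·x_{α,n} for 1 ≤ α,β ≤ r+1 and |p| ≤ max(|α−β|−1, 0); (c) M_n·ξ_{β,n+p} = q^{−1}·ξ_{β,n+p}·M_n for 1 ≤ β ≤ r+1 and −β ≤ p ≤ β−1. -/

import Mathlib

/-- ξ_{α,n} := M_{α,n} · M_{α,n+1}⁻¹ -/
def xiv {R : Type*} [Ring R] (M Mi : ℕ → ℤ → R) (α : ℕ) (n : ℤ) : R :=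
  M α n * Mi α (n + 1)

/-- ξ_{α,n}⁻¹ = M_{α,n+1} · M_{α,n}⁻¹ -/
def xivInv {R : Type*} [Ring R] (M Mi : ℕ → ℤ → R) (α : ℕ) (n : ℤ) : R :=
  M α (n + 1) * Mi α n

/-- x_{α,n} := ξ_{α,n}⁻¹ · ξ_{α-1,n} -/
def xv {R : Type*} [Ring R] (M Mi : ℕ → ℤ → R) (α : ℕ) (n : ℤ) : R :=
  xivInv M Mi α n * xiv M Mi (α - 1) n

/-!
If `a` `q`-commutes with `b` with exponent `e` and with an invertible `u` with exponent `f`, it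
`q`-commutes with `b * u⁻¹` with exponent `e - f`. The exponent of `M α n` against `M β m` is
`(m - n) * min α β`, which is affine in `m` with slope `min α β`; hence `M α n` `q`-commutes with
`ξ β m = M β m * (M β (m + 1))⁻¹` with exponent `-min α β`, independently of `n` and `m` within the
range of the relations. The same cancellation on the other side, applied to `M α n` and
`M α (n + 1)`, shows that `ξ α n` and `ξ β m` commute. Passing from `ξ` to `x` involves the rows
`α - 1` and `β - 1` as well, which can shrink the distance between the rows by one.
-/

/-- `a` and `b` commute up to the factor `q ^ e`, that is `a * b = q ^ e * b * a`. It is phrased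
through `SemiconjBy` to make the library on semiconjugation available. -/
def QCommute {R : Type*} [Monoid R] (q : Rˣ) (e : ℤ) (a b : R) : Prop :=
  SemiconjBy a b ((q ^ e : Rˣ) * b)

namespace QCommute

variable {R : Type*} [Monoid R] {q u : Rˣ} {e f : ℤ} {a b c : R}

theorem symm (h : QCommute q e a b) : QCommute q (-e) b a := by
  have hab : a * b = (q ^ e : Rˣ) * (b * a) := by rw [← mul_assoc]; exact h.eq
  rw [QCommute, SemiconjBy, mul_assoc, hab, zpow_neg, Units.inv_mul_cancel_left]

theorem mul_right (hqb : Commute (q : R) b) (hb : QCommute q e a b) (hc : QCommute q f a c) :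
    QCommute q (e + f) a (b * c) := by
  have hbq : Commute b (q ^ f : Rˣ) := hqb.symm.units_zpow_right f
  have hbc := SemiconjBy.mul_right hb hc
  rwa [hbq.mul_mul_mul_comm, ← Units.val_mul, ← zpow_add] at hbc

theorem units_inv_right (hqu : Commute (q : R) u) (h : QCommute q e a u) :
    QCommute q (-e) a (u⁻¹ : Rˣ) := by
  have huq : Commute ((u⁻¹ : Rˣ) : R) (q ^ (-e) : Rˣ) :=
    hqu.symm.units_inv_left.units_zpow_right (-e)
  have hinv : SemiconjBy a (u⁻¹ : Rˣ) ((q ^ e * u)⁻¹ : Rˣ) := SemiconjBy.units_inv_right h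
  rwa [mul_inv_rev, ← zpow_neg, Units.val_mul, huq.eq] at hinv

theorem mul_units_inv_right (hqb : Commute (q : R) b) (hqu : Commute (q : R) u)
    (hb : QCommute q e a b) (hu : QCommute q f a u) : QCommute q (e - f) a (b * (u⁻¹ : Rˣ)) :=
  sub_eq_add_neg e f ▸ hb.mul_right hqb (hu.units_inv_right hqu)

theorem commute_mul_units_inv (hqb : Commute (q : R) b) (hqu : Commute (q : R) u)
    (hb : QCommute q e a b) (hu : QCommute q e a u) : Commute a (b * (u⁻¹ : Rˣ)) := by
  simpa [QCommute, Commute] using hb.mul_units_inv_right hqb hqu hu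

end QCommute

/-- The entries of the rows `M α` with `α ≤ N` are invertible, with inverses the entries of `Mi α`.
Nothing is required of the rows beyond `N`. -/
structure InvertibleFamily {R : Type*} [Ring R] (N : ℕ) (M Mi : ℕ → ℤ → R) : Prop where
  mul_inv {α : ℕ} (hα : α ≤ N) (n : ℤ) : M α n * Mi α n = 1
  inv_mul {α : ℕ} (hα : α ≤ N) (n : ℤ) : Mi α n * M α n = 1

namespace InvertibleFamily

variable {R : Type*} [Ring R] {N : ℕ} {M Mi : ℕ → ℤ → R} {α : ℕ} {n : ℤ}

/-- The element `M α n` bundled with its inverse `Mi α n`, so that lemmas on units apply to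
`xiv` and `xivInv`, which unfold to products of such units and their inverses. -/
def unit (hM : InvertibleFamily N M Mi) (hα : α ≤ N) (n : ℤ) : Rˣ :=
  ⟨M α n, Mi α n, hM.mul_inv hα n, hM.inv_mul hα n⟩

theorem commute_xivInv_left (hM : InvertibleFamily N M Mi) (hα : α ≤ N) {b : R}
    (h : Commute (xiv M Mi α n) b) : Commute (xivInv M Mi α n) b :=
  Commute.units_inv_left (u := hM.unit hα n * (hM.unit hα (n + 1))⁻¹) h

theorem commute_xv_left (hM : InvertibleFamily N M Mi) (hα : α ≤ N) {b : R}
    (h : Commute (xiv M Mi α n) b) (hpred : Commute (xiv M Mi (α - 1) n) b) :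
    Commute (xv M Mi α n) b :=
  (hM.commute_xivInv_left hα h).mul_left hpred

end InvertibleFamily

/-- An invertible family satisfying the extended commutation relations of the quantum Q-system with
respect to the central unit `q`. The paper's `M β (n + p)` is indexed here by `m = n + p`. -/
structure QCommutingFamily {R : Type*} [Ring R] (q : Rˣ) (N : ℕ) (M Mi : ℕ → ℤ → R) : Prop
    extends InvertibleFamily N M Mi where
  central (x : R) : Commute (q : R) x
  qCommute {α β : ℕ} {n m : ℤ} (hα : α ≤ N) (hβ : β ≤ N) (hnm : |m - n| ≤ |(β : ℤ) - α| + 1) :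
    QCommute q ((m - n) * (min α β : ℕ)) (M α n) (M β m)

namespace QCommutingFamily

variable {R : Type*} [Ring R] {q : Rˣ} {N : ℕ} {M Mi : ℕ → ℤ → R} {α β : ℕ} {n m : ℤ}

theorem qCommute_xiv (hM : QCommutingFamily q N M Mi) (hα : α ≤ N) (hβ : β ≤ N)
    (hlower : -(|(β : ℤ) - α| + 1) ≤ m - n) (hupper : m - n ≤ |(β : ℤ) - α|) :
    QCommute q (-(min α β : ℕ)) (M α n) (xiv M Mi β m) := by
  have hnum := hM.qCommute hα hβ (n := n) (m := m) (abs_le.2 ⟨hlower, by lia⟩)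
  have hden : QCommute q ((m + 1 - n) * (min α β : ℕ)) (M α n) (hM.unit hβ (m + 1)) :=
    hM.qCommute hα hβ (abs_le.2 ⟨by lia, by lia⟩)
  have hexp : (m - n) * ((min α β : ℕ) : ℤ) - (m + 1 - n) * (min α β : ℕ) = -(min α β : ℕ) := by
    ring
  exact hexp ▸ hnum.mul_units_inv_right (hM.central _) (hM.central _) hden

theorem commute_xiv (hM : QCommutingFamily q N M Mi) (hα : α ≤ N) (hβ : β ≤ N)
    (hnm : |m - n| ≤ |(α : ℤ) - β|) : Commute (xiv M Mi α n) (xiv M Mi β m) := by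
  rw [abs_sub_comm (α : ℤ), abs_le] at hnm
  have hnum := hM.qCommute_xiv hα hβ (n := n) (m := m) (by lia) hnm.2
  have hden : QCommute q (-(min α β : ℕ)) (hM.unit hα (n + 1) : R) (xiv M Mi β m) :=
    hM.qCommute_xiv hα hβ (by lia) (by lia)
  exact (hnum.symm.commute_mul_units_inv (hM.central _) (hM.central _) hden.symm).symm

theorem commute_xv (hM : QCommutingFamily q N M Mi) (hα : α ≤ N) (hβ : β ≤ N)
    (hnm : |m - n| ≤ max (|(α : ℤ) - β| - 1) 0) : Commute (xv M Mi α n) (xv M Mi β m) := by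
  rcases eq_or_ne α β with rfl | hne
  · obtain rfl : m = n := by simpa [sub_eq_zero] using hnm
    exact Commute.refl _
  have hξξ {i j : ℕ} (hi : i = α ∨ i = α - 1) (hj : j = β ∨ j = β - 1) :
      Commute (xiv M Mi i n) (xiv M Mi j m) := by
    have hij : |m - n| ≤ |(i : ℤ) - j| := by
      simp only [abs_eq_max_neg] at hnm ⊢
      lia
    exact hM.commute_xiv (by lia) (by lia) hij
  have hξx {i : ℕ} (hi : i = α ∨ i = α - 1) : Commute (xiv M Mi i n) (xv M Mi β m) :=
    (hM.commute_xv_left hβ (hξξ hi (.inl rfl)).symm (hξξ hi (.inr rfl)).symm).symm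
  exact hM.commute_xv_left hα (hξx (.inl rfl)) (hξx (.inr rfl))

end QCommutingFamily

theorem quantum_Q_xi_x_commutation_general
    {R : Type*} [Ring R] (q : Rˣ) (hq : ∀ x : R, (q : R) * x = x * (q : R))
    (N : ℕ) (M Mi : ℕ → ℤ → R)
    (hMiL : ∀ (α : ℕ) (n : ℤ), α ≤ N → M α n * Mi α n = 1)
    (hMiR : ∀ (α : ℕ) (n : ℤ), α ≤ N → Mi α n * M α n = 1)
    (hext : ∀ (α β : ℕ) (n p : ℤ), α ≤ N → β ≤ N →
      |p| ≤ |(β : ℤ) - (α : ℤ)| + 1 →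
      M α n * M β (n + p) = ((q ^ (p * ((min α β : ℕ) : ℤ)) : Rˣ) : R) * M β (n + p) * M α n) :
    (∀ (α β : ℕ) (n p : ℤ), α ≤ N → β ≤ N → |p| ≤ |(α : ℤ) - (β : ℤ)| →
      xiv M Mi α n * xiv M Mi β (n + p) = xiv M Mi β (n + p) * xiv M Mi α n)
    ∧ (∀ (α β : ℕ) (n p : ℤ), 1 ≤ α → α ≤ N → 1 ≤ β → β ≤ N →
        |p| ≤ max (|(α : ℤ) - (β : ℤ)| - 1) 0 →
      xv M Mi α n * xv M Mi β (n + p) = xv M Mi β (n + p) * xv M Mi α n)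
    ∧ (∀ (β : ℕ) (n p : ℤ), 1 ≤ β → β ≤ N → -(β : ℤ) ≤ p → p ≤ (β : ℤ) - 1 →
      M 1 n * xiv M Mi β (n + p)
        = ((q⁻¹ : Rˣ) : R) * xiv M Mi β (n + p) * M 1 n) := by
  have hM : QCommutingFamily q N M Mi :=
    { central := hq
      mul_inv := fun hα n ↦ hMiL _ n hα
      inv_mul := fun hα n ↦ hMiR _ n hα
      qCommute := fun {α β n m} hα hβ hnm ↦ by
        have hp := hext α β n (m - n) hα hβ hnm
        rwa [add_sub_cancel] at hp }
  refine ⟨fun α β n p hα hβ hp ↦ ?_, fun α β n p _ hα _ hβ hp ↦ ?_, fun β n p hβ₁ hβ hlo hhi ↦ ?_⟩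
  · exact hM.commute_xiv hα hβ (by simpa using hp)
  · exact hM.commute_xv hα hβ (by simpa using hp)
  · have hdist : |(β : ℤ) - (1 : ℕ)| = β - 1 := abs_of_nonneg (by lia)
    have h := hM.qCommute_xiv (n := n) (m := n + p) (hβ₁.trans hβ) hβ (by lia) (by lia)
    simpa [QCommute, SemiconjBy, hβ₁] using h

theorem quantum_Q_xi_x_commutation
    {R : Type*} [Ring R] (q A Δ : Rˣ)
    (hq : ∀ x : R, (q : R) * x = x * (q : R))
    (r : ℕ) (hr : 1 ≤ r)
    (M Mi : ℕ → ℤ → R)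
    (hM0 : ∀ n : ℤ, M 0 n = 1)
    (hMtop : ∀ n : ℤ, M (r + 2) n = 0)
    (hMiL : ∀ (α : ℕ) (n : ℤ), α ≤ r + 1 → M α n * Mi α n = 1)
    (hMiR : ∀ (α : ℕ) (n : ℤ), α ≤ r + 1 → Mi α n * M α n = 1)
    (hMsys : ∀ (α : ℕ) (n : ℤ), 1 ≤ α → α ≤ r + 1 →
      (q : R) ^ α * M α (n + 1) * M α (n - 1) = M α n ^ 2 - M (α + 1) n * M (α - 1) n)
    (hcom : ∀ (α β ε : ℕ) (n : ℤ), ε ≤ 1 → α ≤ r + 1 → β ≤ r + 1 →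
      M α n * M β (n + (ε : ℤ)) = (q : R) ^ (ε * min α β) * M β (n + (ε : ℤ)) * M α n)
    (hAΔ : ∀ n : ℤ, M (r + 1) n = ((A ^ n : Rˣ) : R) * (Δ : R))
    (hΔM : ∀ (α : ℕ) (n : ℤ), 1 ≤ α → α ≤ r + 1 →
      (Δ : R) * M α n = ((q ^ ((α : ℤ) * n) : Rˣ) : R) * M α n * (Δ : R))
    (hAM : ∀ (α : ℕ) (n : ℤ), 1 ≤ α → α ≤ r + 1 →
      (A : R) * M α n = ((q ^ (-(α : ℤ)) : Rˣ) : R) * M α n * (A : R))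
    (hΔA : (Δ : R) * (A : R) = (q : R) ^ (r + 1) * (A : R) * (Δ : R))
    (hext : ∀ (α β : ℕ) (n p : ℤ), α ≤ r + 1 → β ≤ r + 1 →
      |p| ≤ |(β : ℤ) - (α : ℤ)| + 1 →
      M α n * M β (n + p) = ((q ^ (p * ((min α β : ℕ) : ℤ)) : Rˣ) : R) * M β (n + p) * M α n) :
    (∀ (α β : ℕ) (n p : ℤ), α ≤ r + 1 → β ≤ r + 1 → |p| ≤ |(α : ℤ) - (β : ℤ)| →
      xiv M Mi α n * xiv M Mi β (n + p) = xiv M Mi β (n + p) * xiv M Mi α n)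
    ∧ (∀ (α β : ℕ) (n p : ℤ), 1 ≤ α → α ≤ r + 1 → 1 ≤ β → β ≤ r + 1 →
        |p| ≤ max (|(α : ℤ) - (β : ℤ)| - 1) 0 →
      xv M Mi α n * xv M Mi β (n + p) = xv M Mi β (n + p) * xv M Mi α n)
    ∧ (∀ (β : ℕ) (n p : ℤ), 1 ≤ β → β ≤ r + 1 → -(β : ℤ) ≤ p → p ≤ (β : ℤ) - 1 →
      M 1 n * xiv M Mi β (n + p)
        = ((q⁻¹ : Rˣ) : R) * xiv M Mi β (n + p) * M 1 n) :=
  quantum_Q_xi_x_commutation_general q hq (r + 1) M Mi hMiL hMiR hext
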